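/- For every nonnegative integer n, there exist integers x, y, z, each relatively prime to 6, such that 24n + 5 = x² + y² + 3z². -/

import Mathlib

theorem round_exists (B A : ℤ) (hA : 0 < A) : ∃ k : ℤ, -A ≤ 2 * (B - k * A) ∧ 2 * (B - k * A) ≤ A := by
  refine ⟨(2 * B + A) / (2 * A), ?_, ?_⟩
  · have := Int.ediv_mul_le (2 * B + A) (b := 2 * A) (by omega)
    nlinarith
  · have := Int.lt_ediv_add_one_mul_self (2 * B + A) (b := 2 * A) (by omega)
    nlinarith

/-- Reduction of positive binary forms of determinant 3. -/
theorem binary_red (N : ℕ) : ∀ (b c d v : ℤ), 0 < b → b ≤ N → b * c - d ^ 2 = 3 →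
    (∃ y z : ℤ, v = b * y ^ 2 + 2 * d * y * z + c * z ^ 2) →
    (∃ y z : ℤ, v = y ^ 2 + 3 * z ^ 2) ∨ (∃ y z : ℤ, v = 2 * (y ^ 2 + y * z + z ^ 2)) := by
  induction N with
  | zero => intro b c d v h1 h2; push_cast at h2; omega
  | succ N ih =>
    intro b c d v hb hN hdet ⟨y, z, hv⟩
    obtain ⟨k, hk1, hk2⟩ := round_exists d b hb
    obtain ⟨d', hd'⟩ : ∃ d', d' = d - k * b := ⟨_, rfl⟩
    obtain ⟨c', hc'⟩ : ∃ c', c' = c - 2 * k * d + k ^ 2 * b := ⟨_, rfl⟩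
    obtain ⟨y', hy'⟩ : ∃ y', y' = y + k * z := ⟨_, rfl⟩
    rw [← hd'] at hk1 hk2
    have hv' : v = b * y' ^ 2 + 2 * d' * y' * z + c' * z ^ 2 := by
      rw [hv, hy', hd', hc']; ring
    have hdet' : b * c' - d' ^ 2 = 3 := by rw [← hdet, hd', hc']; ring
    have hc0 : 0 < c' := by
      have : 0 < b * c' := by nlinarith [sq_nonneg d']
      exact pos_of_mul_pos_right this hb.le
    by_cases hlt : c' < b
    · refine ih c' b d' v hc0 (by push_cast at hN; omega) (by linarith) ⟨z, y', ?_⟩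
      rw [hv']; ring
    · push Not at hlt
      have hsq : 4 * d' ^ 2 ≤ b ^ 2 := by nlinarith
      have hb2 : b ≤ 2 := by nlinarith
      have hd1 : -1 ≤ d' := by omega
      have hd2 : d' ≤ 1 := by omega
      interval_cases b
      · have : d' = 0 := by omega
        subst this
        left
        refine ⟨y', z, ?_⟩
        have : c' = 3 := by linarith
        rw [hv', this]; ring
      · right
        interval_cases d'
        · have : c' = 2 := by linarith
          refine ⟨y', -z, ?_⟩
          rw [hv', this]; ring
        · omega
        · have : c' = 2 := by linarith
          refine ⟨y', z, ?_⟩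
          rw [hv', this]; ring

theorem lead_one (a A : ℤ) (ha : 0 < a) (h3 : 3 * a ^ 2 ≤ 4 * A) (hA4 : A ^ 2 ≤ 4 * a) : a = 1 := by
  by_contra hne
  have h2 : 2 ≤ a := by omega
  have h4 : 3 * a ≤ 2 * A := by nlinarith
  have h5 : (3 * a) ^ 2 ≤ (2 * A) ^ 2 := pow_le_pow_left₀ (by omega) h4 2
  have h6 : 9 * a * a ≤ 16 * a := by linarith
  have h7 : 9 * a ≤ 16 := le_of_mul_le_mul_right h6 ha
  omega

/-- `v` is represented by the ternary form with coefficients `a b c d e f`. -/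
def TRep (a b c d e f v : ℤ) : Prop :=
  ∃ x y z : ℤ, v = a * x ^ 2 + b * y ^ 2 + c * z ^ 2 + 2 * d * y * z + 2 * e * x * z + 2 * f * x * y

theorem ternary_red (v : ℤ) (N : ℕ) : ∀ (M : ℕ) (a b c d e f : ℤ), 0 < a → a ≤ N →
    0 < a * b - f ^ 2 → a * b - f ^ 2 ≤ M →
    a * b * c + 2 * d * e * f - a * d ^ 2 - b * e ^ 2 - c * f ^ 2 = 3 → TRep a b c d e f v →
    ∃ b c d : ℤ, 0 < b ∧ b * c - d ^ 2 = 3 ∧ TRep 1 b c d 0 0 v := by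
  induction N with
  | zero => intro M a b c d e f h1 h2; push_cast at h2; omega
  | succ N ihN =>
    intro M
    induction M with
    | zero => intro a b c d e f _ _ h1 h2; push_cast at h2; omega
    | succ M ihM =>
      intro a b c d e f ha haN hA hAM hdet hrep
      -- reduce the adjoint binary form
      obtain ⟨k, hk1, hk2⟩ := round_exists (a * d - e * f) (a * b - f ^ 2) hA
      obtain ⟨d', hd'⟩ : ∃ d', d' = d - k * b := ⟨_, rfl⟩
      obtain ⟨e', he'⟩ : ∃ e', e' = e - k * f := ⟨_, rfl⟩
      obtain ⟨c', hc'⟩ : ∃ c', c' = c - 2 * k * d + k ^ 2 * b := ⟨_, rfl⟩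
      have hB : a * d - e * f - k * (a * b - f ^ 2) = a * d' - e' * f := by
        rw [hd', he']; ring
      rw [hB] at hk1 hk2
      have hdet' : a * b * c' + 2 * d' * e' * f - a * d' ^ 2 - b * e' ^ 2 - c' * f ^ 2 = 3 := by
        rw [← hdet, hd', he', hc']; ring
      have hrep' : TRep a b c' d' e' f v := by
        obtain ⟨x, y, z, h⟩ := hrep
        refine ⟨x, y + k * z, z, ?_⟩
        rw [h, hd', he', hc']; ring
      have hAC : (a * b - f ^ 2) * (a * c' - e' ^ 2) = 3 * a + (a * d' - e' * f) ^ 2 := by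
        rw [← hdet']; ring
      obtain ⟨A, hAe⟩ : ∃ A, A = a * b - f ^ 2 := ⟨_, rfl⟩
      obtain ⟨B, hBe⟩ : ∃ B, B = a * d' - e' * f := ⟨_, rfl⟩
      obtain ⟨C, hCe⟩ : ∃ C, C = a * c' - e' ^ 2 := ⟨_, rfl⟩
      have hC0 : 0 < C := by
        rw [← hAe, ← hCe] at hAC
        rw [← hAe] at hA
        have : 0 < A * C := by rw [hAC]; positivity
        exact pos_of_mul_pos_right this hA.le
      by_cases hlt : C < A
      · refine ihM a c' b d' f e' ha haN (by linarith) (by push_cast at hAM; omega)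
          (by rw [← hdet']; ring) ?_
        obtain ⟨x, y, z, h⟩ := hrep'
        refine ⟨x, z, y, ?_⟩
        rw [h]; ring
      · push Not at hlt
        have hA4 : A ^ 2 ≤ 4 * a := by
          rw [← hAe, ← hCe, ← hBe] at hAC
          rw [← hAe] at hA
          rw [← hAe, ← hBe] at hk1 hk2
          have : 4 * B ^ 2 ≤ A ^ 2 := by nlinarith
          nlinarith
        clear hk1 hk2 hB hrep hdet hd' he' hc'
        obtain ⟨l, hl1, hl2⟩ := round_exists f a ha
        obtain ⟨f', hf'⟩ : ∃ f', f' = f - l * a := ⟨_, rfl⟩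
        obtain ⟨b', hb'⟩ : ∃ b', b' = b - 2 * l * f + l ^ 2 * a := ⟨_, rfl⟩
        obtain ⟨d'', hd''⟩ : ∃ d'', d'' = d' - l * e' := ⟨_, rfl⟩
        rw [← hf'] at hl1 hl2
        have hA' : A = a * b' - f' ^ 2 := by rw [hAe, hb', hf']; ring
        have hdet'' : a * b' * c' + 2 * d'' * e' * f' - a * d'' ^ 2 - b' * e' ^ 2 - c' * f' ^ 2 = 3 := by
          rw [← hdet', hb', hf', hd'']; ring
        have hrep'' : TRep a b' c' d'' e' f' v := by
          obtain ⟨x, y, z, h⟩ := hrep'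
          refine ⟨x + l * y, y, z, ?_⟩
          rw [h, hb', hf', hd'']; ring
        rw [← hAe] at hA
        have hb0 : 0 < b' := by
          have : 0 < a * b' := by nlinarith [sq_nonneg f']
          exact pos_of_mul_pos_right this ha.le
        by_cases hlt2 : b' < a
        · refine ihN A.toNat b' a c' e' d'' f' hb0 (by push_cast at haN; omega) (by linarith)
            (by rw [Int.toNat_of_nonneg hA.le]; linarith) (by rw [← hdet'']; ring) ?_
          obtain ⟨x, y, z, h⟩ := hrep''
          refine ⟨y, x, z, ?_⟩
          rw [h]; ring
        · push Not at hlt2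
          have hf4 : 4 * f' ^ 2 ≤ a ^ 2 := by nlinarith
          have h3 : 3 * a ^ 2 ≤ 4 * A := by nlinarith
          have ha1 : a = 1 := lead_one a A ha h3 hA4
          subst ha1
          refine ⟨b' - f' ^ 2, c' - e' ^ 2, d'' - e' * f', by linarith, ?_, ?_⟩
          · rw [← hdet'']; ring
          · obtain ⟨x, y, z, h⟩ := hrep''
            refine ⟨x + f' * y + e' * z, y, z, ?_⟩
            rw [h]; ring

theorem exists_prime_square (m : ℕ) (hm : m % 24 = 5) :
    ∃ (p c : ℕ) (a f : ℤ), 0 < p ∧ 0 < c ∧ (p : ℤ) = 4 * m * c - 3 ∧ a * p - f ^ 2 = 4 * c := by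
  have hco : Nat.Coprime (4 * m - 3) (48 * m) := by
    apply Nat.Coprime.mul_right
    · have h2 : Nat.Coprime (4 * m - 3) 2 := by
        rw [Nat.coprime_comm, Nat.Prime.coprime_iff_not_dvd Nat.prime_two]; omega
      have h3 : Nat.Coprime (4 * m - 3) 3 := by
        rw [Nat.coprime_comm, Nat.Prime.coprime_iff_not_dvd Nat.prime_three]; omega
      exact Nat.Coprime.mul_right (h2.pow_right 4) h3
    · have h3 : Nat.Coprime 3 m := by
        rw [Nat.Prime.coprime_iff_not_dvd Nat.prime_three]; omega
      have hg1 := Nat.gcd_dvd_left (4 * m - 3) m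
      have hg2 := Nat.gcd_dvd_right (4 * m - 3) m
      have : Nat.gcd (4 * m - 3) m ∣ 3 := by
        have := Nat.dvd_sub (hg2.mul_left 4) hg1
        rwa [show 4 * m - (4 * m - 3) = 3 by omega] at this
      exact Nat.eq_one_of_dvd_coprimes h3 this hg2
  obtain ⟨p, hpgt, hp, hmod⟩ := Nat.forall_exists_prime_gt_and_modEq (4 * m) (by omega) hco
  obtain ⟨t, ht⟩ := (Nat.modEq_iff_dvd' (by omega)).1 hmod.symm
  have hpt : p = 48 * m * t + (4 * m - 3) := by omega
  have hpZ : (p : ℤ) = 4 * m * ((12 * t + 1 : ℕ) : ℤ) - 3 := by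
    rw [hpt]; push_cast [show 3 ≤ 4 * m by omega]; ring
  have hp4 : p % 4 = 1 := by
    have : (p : ℤ) = 4 * (m * ((12 * t + 1 : ℕ) : ℤ)) - 3 := by rw [hpZ]; ring
    omega
  have : Fact p.Prime := ⟨hp⟩
  have hpodd : Odd p := Nat.odd_iff.2 (by omega)
  have hcodd : Odd (12 * t + 1) := Nat.odd_iff.2 (by omega)
  have hJ3 : jacobiSym 3 (12 * t + 1) = 1 := by
    have h := jacobiSym.quadratic_reciprocity_one_mod_four' (a := 3) (b := 12 * t + 1) (by decide) (by omega)
    rw [Nat.cast_ofNat] at h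
    rw [h, jacobiSym.mod_left, show (((12 * t + 1 : ℕ) : ℤ) % ((3 : ℕ) : ℤ)) = 1 by omega]
    exact jacobiSym.one_left 3
  have hJc : jacobiSym ((12 * t + 1 : ℕ) : ℤ) p = 1 := by
    rw [jacobiSym.quadratic_reciprocity_one_mod_four' hcodd hp4]
    rw [jacobiSym.mod_left' (a₂ := -3)]
    · rw [jacobiSym.neg _ hcodd, hJ3, ZMod.χ₄_nat_one_mod_four (by omega)]; rfl
    · rw [hpZ]
      apply Int.ModEq.symm
      apply (Int.modEq_iff_dvd).2
      exact ⟨4 * m, by ring⟩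
  have hJ : jacobiSym (-(4 * ((12 * t + 1 : ℕ) : ℤ))) p = 1 := by
    rw [jacobiSym.neg _ hpodd, ZMod.χ₄_nat_one_mod_four hp4, jacobiSym.mul_left, hJc,
      jacobiSym.at_four hpodd]; rfl
  obtain ⟨r, hr⟩ := ZMod.isSquare_of_jacobiSym_eq_one hJ
  obtain ⟨f, rfl⟩ := ZMod.intCast_surjective r
  rw [← Int.cast_mul, ZMod.intCast_eq_intCast_iff_dvd_sub] at hr
  obtain ⟨a, hae⟩ := hr
  refine ⟨p, 12 * t + 1, a, f, hp.pos, by omega, hpZ, ?_⟩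
  linarith

theorem rep_basic (m : ℕ) (hm : m % 24 = 5) : ∃ x y z : ℤ, (m : ℤ) = x ^ 2 + y ^ 2 + 3 * z ^ 2 := by
  obtain ⟨p, k, a, f, hp, hk, hpk, haf⟩ := exists_prime_square m hm
  have hp' : (0 : ℤ) < p := by exact_mod_cast hp
  have hk' : (0 : ℤ) < k := by exact_mod_cast hk
  have ha : 0 < a := by
    have : 0 < a * p := by nlinarith [sq_nonneg f]
    exact pos_of_mul_pos_left this hp'.le
  obtain ⟨b, c, d, hb, hdet, x, y, z, hv⟩ := ternary_red m a.toNat (4 * k) a p m 0 1 f ha (by omega) (by omega)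
    (by push_cast; omega) (by linear_combination (m : ℤ) * haf - hpk) ⟨0, 0, 1, by ring⟩
  rcases binary_red b.toNat b c d (m - x ^ 2) hb (by omega) hdet ⟨y, z, by rw [hv]; ring⟩ with
    ⟨y, z, h⟩ | ⟨y, z, h⟩
  · exact ⟨x, y, z, by linarith⟩
  · exfalso
    have h8 : (m : ℤ) % 8 = 5 := by omega
    have h1 : (m : ℤ) = x ^ 2 + 2 * (y ^ 2 + y * z + z ^ 2) := by linarith
    rw [h1] at h8
    have e : ((x ^ 2 + 2 * (y ^ 2 + y * z + z ^ 2) : ℤ) : ZMod 8) = ((5 : ℤ) : ZMod 8) := by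
      rw [ZMod.intCast_eq_intCast_iff]; exact h8
    push_cast at e
    generalize (x : ZMod 8) = X at e
    generalize (y : ZMod 8) = Y at e
    generalize (z : ZMod 8) = Z at e
    revert X Y Z
    decide

/-- Rotating the form `y ^ 2 + 3 * z ^ 2` with `y`, `z` odd. -/
theorem rotate_odd (y z : ℤ) (hy : y % 2 = 1) (hz : z % 2 = 1) (hy3 : y % 3 ≠ 0) (hz3 : z % 3 = 0) :
    ∃ u w : ℤ, u % 2 = 1 ∧ w % 2 = 1 ∧ w % 3 ≠ 0 ∧ y ^ 2 + 3 * z ^ 2 = u ^ 2 + 3 * w ^ 2 := by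
  by_cases h : (y - z) % 4 = 2
  · obtain ⟨w, hw⟩ : ∃ w, y = z + 2 * w := ⟨(y - z) / 2, by omega⟩
    refine ⟨w + 2 * z, w, by omega, by omega, by omega, ?_⟩
    rw [hw]; ring
  · obtain ⟨w, hw⟩ : ∃ w, y = -z + 2 * w := ⟨(y + z) / 2, by omega⟩
    refine ⟨w - 2 * z, w, by omega, by omega, by omega, ?_⟩
    rw [hw]; ring

theorem gcd_six (x : ℤ) (h2 : x % 2 = 1) (h3 : x % 3 ≠ 0) : Int.gcd x 6 = 1 := by
  rw [← Int.isCoprime_iff_gcd_eq_one]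
  have : x % 6 = 1 ∨ x % 6 = 5 := by omega
  rcases this with h | h
  · exact ⟨1, -(x / 6), by omega⟩
  · exact ⟨-1, x / 6 + 1, by omega⟩

theorem sq_mod_three (x : ℤ) : (x % 3 = 0 ∧ x ^ 2 % 3 = 0) ∨ (x % 3 ≠ 0 ∧ x ^ 2 % 3 = 1) := by
  have : x % 3 = 0 ∨ x % 3 = 1 ∨ x % 3 = 2 := by omega
  rcases this with h | h | h <;> simp [pow_two, Int.mul_emod, h]

theorem sq_mod_eight (x : ℤ) : (x % 2 = 1 ∧ x ^ 2 % 8 = 1) ∨ (x % 4 = 0 ∧ x ^ 2 % 8 = 0) ∨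
    (x % 4 = 2 ∧ x ^ 2 % 8 = 4) := by
  have h8 : x ^ 2 % 8 = (x % 8) * (x % 8) % 8 := by rw [pow_two, Int.mul_emod]
  have : x % 8 = 0 ∨ x % 8 = 1 ∨ x % 8 = 2 ∨ x % 8 = 3 ∨ x % 8 = 4 ∨ x % 8 = 5 ∨ x % 8 = 6 ∨
    x % 8 = 7 := by omega
  rcases this with h | h | h | h | h | h | h | h <;> rw [h] at h8 <;> omega

/-- If `y`, `z` are even and not congruent mod 4, both can be made odd. -/
theorem make_odd (y z : ℤ) (hy : y % 2 = 0) (hz : z % 2 = 0) (h : (y - z) % 4 = 2) :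
    ∃ u w : ℤ, u % 2 = 1 ∧ w % 2 = 1 ∧ y ^ 2 + 3 * z ^ 2 = u ^ 2 + 3 * w ^ 2 := by
  obtain ⟨w, hw⟩ : ∃ w, y = z + 2 * w := ⟨(y - z) / 2, by omega⟩
  refine ⟨w + 2 * z, w, by omega, by omega, ?_⟩
  rw [hw]; ring

theorem rep_odd (m : ℕ) (hm : m % 24 = 5) : ∃ x y z : ℤ, x % 2 = 1 ∧ y % 2 = 1 ∧ z % 2 = 1 ∧
    (m : ℤ) = x ^ 2 + y ^ 2 + 3 * z ^ 2 := by
  obtain ⟨x, y, z, h⟩ := rep_basic m hm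
  have hx := sq_mod_eight x
  have hy := sq_mod_eight y
  have hz := sq_mod_eight z
  by_cases hx1 : x % 2 = 1
  · by_cases hy1 : y % 2 = 1
    · exact ⟨x, y, z, hx1, hy1, by omega, h⟩
    · obtain ⟨u, w, hu, hw, he⟩ := make_odd y z (by omega) (by omega) (by omega)
      exact ⟨x, u, w, hx1, hu, hw, by linarith⟩
  · obtain ⟨u, w, hu, hw, he⟩ := make_odd x z (by omega) (by omega) (by omega)
    exact ⟨y, u, w, by omega, hu, hw, by linarith⟩

theorem rep_24n_add_five (n : ℕ) :
    ∃ x y z : ℤ, Int.gcd x 6 = 1 ∧ Int.gcd y 6 = 1 ∧ Int.gcd z 6 = 1 ∧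
      24 * (n : ℤ) + 5 = x ^ 2 + y ^ 2 + 3 * z ^ 2 := by
  obtain ⟨x, y, z, hx, hy, hz, h⟩ := rep_odd (24 * n + 5) (by omega)
  push_cast at h
  have h3x := sq_mod_three x
  have h3y := sq_mod_three y
  have hx3 : x % 3 ≠ 0 := by omega
  have hy3 : y % 3 ≠ 0 := by omega
  by_cases hz3 : z % 3 = 0
  · obtain ⟨u, w, hu, hw, hw3, he⟩ := rotate_odd y z hy hz hy3 hz3
    have h3u := sq_mod_three u
    have hu3 : u % 3 ≠ 0 := by omega
    exact ⟨x, u, w, gcd_six x hx hx3, gcd_six u hu hu3, gcd_six w hw hw3, by linarith⟩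
  · exact ⟨x, y, z, gcd_six x hx hx3, gcd_six y hy hy3, gcd_six z hz hz3, h⟩
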